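/- arXiv:1710.07261 — 4 statements merged into one kernel-verified Lean document; each statement's English description precedes it below -/
import Mathlib

section
/- Let k, l ≥ 2 be multiplicatively independent integers. Let a be a k-automatic sequence and b an l-automatic sequence, both with values in a finite totally ordered set Ω. Suppose ℒ(a) = ℒ(b) and that a and b are both uniformly recurrent. Then a and b are periodic. (One may assume as input the theorem of Allouche–Rampersad–Shallit: for any k-automatic sequence a with values in a finite ordered set, the sequence min(a) is k-automatic; and the Morse–Hedlund-type fact that a sequence whose number of factors of each length n is bounded independently of n is ultimately periodic.) -/
open Filter

/-- The upper density of a set of natural numbers: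
`limsup_{n → ∞} |A ∩ [0,n)| / n`. -/
noncomputable def upperDensity (A : Set ℕ) : ℝ :=
  limsup (fun n : ℕ => (Nat.card ↥(A ∩ Set.Iio n) : ℝ) / n) atTop

/-- The base-`k` representation of `n` as a word over `Σ_k = Fin k`, read starting
from the leading digit, with no leading zeros (junk value `[]` if `k ≤ 1`;
the representation of `0` is the empty word). -/
def kRepr (k n : ℕ) : List (Fin k) :=
  if h : 1 < k then
    (Nat.digits k n).reverse.pmap (fun d hd => (⟨d, hd⟩ : Fin k))
      (fun d hd => Nat.digits_lt_base h (List.mem_reverse.mp hd))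
  else []

/-- Run a deterministic automaton with transition function `δ` from the state `s`
on the word `w`, reading `w` from the left: the extended transition function `δ*`. -/
def run {S : Type*} {k : ℕ} (δ : S → Fin k → S) (s : S) (w : List (Fin k)) : S :=
  w.foldl δ s

/-- A sequence `a : ℕ → Ω` is `k`-automatic if it is produced by a deterministic
finite automaton with output, reading the base-`k` representation of the input
starting from the leading digit. -/
def IsAutomatic {Ω : Type*} (k : ℕ) (a : ℕ → Ω) : Prop :=
  ∃ (S : Type) (_ : Fintype S) (δ : S → Fin k → S) (s₀ : S) (τ : S → Ω),
    ∀ n : ℕ, a n = τ (run δ s₀ (kRepr k n))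

/-- Two integers are multiplicatively independent if no nontrivial powers of them
coincide (equivalently, they are not both powers of a common integer). -/
def MultIndep (k l : ℕ) : Prop :=
  ∀ i j : ℕ, k ^ i = l ^ j → i = 0 ∧ j = 0

/-- The finite word `w` occurs in the sequence `a` at position `i`. -/
def OccursAt {Ω : Type*} (a : ℕ → Ω) (w : List Ω) (i : ℕ) : Prop :=
  ∀ (j : ℕ) (h : j < w.length), w.get ⟨j, h⟩ = a (i + j)

/-- The finite word `w` is a factor of the sequence `a`. -/
def IsFactor {Ω : Type*} (a : ℕ → Ω) (w : List Ω) : Prop :=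
  ∃ i : ℕ, OccursAt a w i

/-- A sequence is uniformly recurrent if each of its factors occurs in it with
bounded gaps. -/
def UniformlyRecurrent {Ω : Type*} (a : ℕ → Ω) : Prop :=
  ∀ w : List Ω, IsFactor a w →
    ∃ C : ℕ, ∀ N : ℕ, ∃ i : ℕ, N ≤ i ∧ i ≤ N + C ∧ OccursAt a w i

/-- A strongly connected component of an automaton: a nonempty set of states closed
under all transitions and such that each of its states can be reached from each
other one by some word. -/
def IsSCC {S : Type*} {k : ℕ} (δ : S → Fin k → S) (C : Set S) : Prop :=
  C.Nonempty ∧ (∀ s ∈ C, ∀ u : Fin k, δ s u ∈ C) ∧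
    ∀ s ∈ C, ∀ s' ∈ C, ∃ w : List (Fin k), run δ s w = s'

/-- The prefix of length `n` of the sequence `c`. -/
def prefixWord {Ω : Type*} (c : ℕ → Ω) (n : ℕ) : List Ω :=
  (List.range n).map c

/-- `c` is the infinite word `min(a)`: for each `n`, the prefix of `c` of length `n`
is the lexicographically least factor of `a` of length `n`. -/
def IsMinWord {Ω : Type*} [LinearOrder Ω] (a c : ℕ → Ω) : Prop :=
  ∀ n : ℕ, IsFactor a (prefixWord c n) ∧
    ∀ w : List Ω, w.length = n → IsFactor a w → ¬ List.Lex (· < ·) w (prefixWord c n)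

/-! ### Automatic sequences as codings of self-similar state sequences -/

/-- A state sequence `f` is `k`-self-similar if the value of `f` at `j ≥ 1` determines its
values at `k * j, …, k * j + k - 1`. -/
def IsSelfSimilar {S : Type*} (k : ℕ) (f : ℕ → S) : Prop :=
  ∀ i j r : ℕ, 1 ≤ i → 1 ≤ j → r < k → f i = f j → f (k * i + r) = f (k * j + r)

lemma map_val_kRepr {k : ℕ} (hk : 1 < k) (n : ℕ) :
    (kRepr k n).map Fin.val = (Nat.digits k n).reverse := by
  simp [kRepr, hk, List.map_pmap]

lemma kRepr_mul_add {k : ℕ} (hk : 1 < k) {j : ℕ} (hj : 1 ≤ j) (r : Fin k) :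
    kRepr k (k * j + r) = kRepr k j ++ [r] := by
  apply List.map_injective_iff.mpr Fin.val_injective
  rw [List.map_append, map_val_kRepr hk, map_val_kRepr hk, add_comm,
    Nat.digits_add k hk r j r.isLt (Or.inr (by omega))]
  simp

lemma IsAutomatic.exists_isSelfSimilar {Ω : Type*} {k : ℕ} (hk : 1 < k) {c : ℕ → Ω}
    (hc : IsAutomatic k c) :
    ∃ (S : Type) (_ : Finite S) (f : ℕ → S) (τ : S → Ω),
      IsSelfSimilar k f ∧ ∀ n, c n = τ (f n) := by
  obtain ⟨S, _, δ, s₀, τ, h⟩ := hc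
  refine ⟨S, inferInstance, fun n => run δ s₀ (kRepr k n), τ, ?_, h⟩
  intro i j r hi hj hr hij
  have hstep : ∀ q, 1 ≤ q → run δ s₀ (kRepr k (k * q + r)) =
      δ (run δ s₀ (kRepr k q)) ⟨r, hr⟩ := by
    intro q hq
    rw [kRepr_mul_add hk hq ⟨r, hr⟩]
    simp [run]
  simp only [hstep i hi, hstep j hj, hij]

lemma IsSelfSimilar.pow {S : Type*} {k : ℕ} (hk : 1 < k) {f : ℕ → S}
    (hf : IsSelfSimilar k f) (m : ℕ) : IsSelfSimilar (k ^ m) f := by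
  induction m with
  | zero =>
    intro i j r _ _ hr hij
    obtain rfl : r = 0 := by simpa using hr
    simpa using hij
  | succ m ih =>
    intro i j r hi hj hr hij
    have hpos : 0 < k ^ m := by positivity
    have hdiv : r / k < k ^ m := by
      rw [Nat.div_lt_iff_lt_mul (by omega)]
      rwa [pow_succ] at hr
    have hsplit : ∀ q, k ^ (m + 1) * q + r = k * (k ^ m * q + r / k) + r % k := by
      intro q
      conv_lhs => rw [← Nat.div_add_mod r k]
      ring
    rw [hsplit i, hsplit j]
    exact hf _ _ _ (le_add_right (Nat.mul_pos hpos hi)) (le_add_right (Nat.mul_pos hpos hj))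
      (Nat.mod_lt _ (by omega)) (ih _ _ _ hi hj hdiv hij)

/-! ### Linear recurrence -/

/-- A uniformly recurrent automatic sequence is linearly recurrent: for some fixed `E`,
each block of length `k ^ m` occurs in every `k`-adic interval of length `k ^ (m + E)`
which does not start at `0`. -/
lemma exists_linear_recurrence {Ω S : Type*} [Finite S] {k : ℕ} (hk : 1 < k) {f : ℕ → S}
    (hf : IsSelfSimilar k f) {τ : S → Ω} {c : ℕ → Ω} (hc : ∀ n, c n = τ (f n))
    (hrec : ∀ n L : ℕ, ∃ C, ∀ N, ∃ i, N ≤ i ∧ i ≤ N + C ∧ ∀ j < L, c (i + j) = c (n + j)) :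
    ∃ E, ∀ m n j : ℕ, 1 ≤ j →
      ∃ i, k ^ (m + E) * j ≤ i ∧ i + k ^ m ≤ k ^ (m + E) * (j + 1) ∧
        ∀ t < k ^ m, c (i + t) = c (n + t) := by
  let pairs : ℕ → Set (S × S × S) := fun e =>
    {x | ∃ j r, 1 ≤ j ∧ r + 1 < k ^ e ∧
      x = (f j, f (k ^ e * j + r), f (k ^ e * j + r + 1))}
  obtain ⟨P, hP⟩ := Finite.exists_infinite_fiber pairs
  have hinf : (pairs ⁻¹' {P}).Infinite := Set.infinite_coe_iff.mp hP
  obtain ⟨E, hE⟩ := hinf.nonempty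
  refine ⟨E, fun m n j hj => ?_⟩
  obtain ⟨C, hC⟩ := hrec n (k ^ m)
  obtain ⟨e, he, hlarge⟩ := hinf.exists_gt (C + 2 * k ^ m)
  have hpairs : pairs e = pairs E := by
    rw [Set.mem_preimage, Set.mem_singleton_iff] at he hE
    rw [he, hE]
  have hm : 0 < k ^ m := by positivity
  have hCe : C + 2 * k ^ m < k ^ e := hlarge.trans (Nat.lt_pow_self hk)
  obtain ⟨i, hi, hi', hocc⟩ := hC (k ^ m * (k ^ e * j))
  obtain ⟨u, rfl⟩ := Nat.exists_eq_add_of_le hi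
  have hu : u ≤ C := by omega
  have hr : u / k ^ m + 1 < k ^ e := by
    have := Nat.div_le_self u (k ^ m)
    omega
  have hmem : (f j, f (k ^ e * j + u / k ^ m), f (k ^ e * j + u / k ^ m + 1)) ∈ pairs E := by
    rw [← hpairs]
    exact ⟨j, u / k ^ m, hj, hr, rfl⟩
  obtain ⟨j', r', hj', hr', heq⟩ := hmem
  simp only [Prod.mk.injEq] at heq
  obtain ⟨hjj, hfst, hsnd⟩ := heq
  have hpos : ∀ q, 1 ≤ k ^ q * j := fun q => Nat.mul_pos (by positivity) (by omega)
  have hfst' : f (k ^ e * j + u / k ^ m) = f (k ^ E * j + r') :=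
    hfst.trans ((hf.pow hk E) j' j r' hj' hj (by omega) hjj.symm)
  have hsnd' : f (k ^ e * j + u / k ^ m + 1) = f (k ^ E * j + r' + 1) :=
    hsnd.trans ((hf.pow hk E) j' j (r' + 1) hj' hj (by omega) hjj.symm)
  have hmod : u % k ^ m < k ^ m := Nat.mod_lt _ hm
  have hdm := Nat.div_add_mod u (k ^ m)
  refine ⟨k ^ m * (k ^ E * j + r') + u % k ^ m, ?_, ?_, fun t ht => ?_⟩
  · rw [pow_add, mul_assoc, mul_add, add_assoc]
    exact Nat.le_add_right _ _
  · have : k ^ m * (r' + 2) ≤ k ^ m * k ^ E := Nat.mul_le_mul_left _ (by omega)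
    rw [pow_add]
    nlinarith
  · rw [← hocc t ht, hc, hc]
    congr 1
    rcases lt_or_ge (u % k ^ m + t) (k ^ m) with hlt | hge
    · have := (hf.pow hk m) _ _ _ (le_add_right (hpos e)) (le_add_right (hpos E)) hlt hfst'
      convert this.symm using 2
      · ring
      · linear_combination -hdm
    · obtain ⟨v, hv⟩ := Nat.exists_eq_add_of_le hge
      have := (hf.pow hk m) _ _ v (le_add_right (le_add_right (hpos e)))
        (le_add_right (le_add_right (hpos E))) (by omega) hsnd'
      convert this.symm using 2
      · linear_combination hv
      · linear_combination hv - hdm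

/-! ### Powers of multiplicatively independent integers -/

lemma exists_pow_close {k l : ℕ} (hk : 2 ≤ k) (hl : 2 ≤ l) (hind : MultIndep k l) (H : ℕ) :
    ∃ m n : ℕ, (k ^ m < l ^ n ∧ H * (l ^ n - k ^ m) ≤ k ^ m) ∨
      (l ^ n < k ^ m ∧ H * (k ^ m - l ^ n) ≤ l ^ n) := by
  have hlogk : 0 < Real.log k := Real.log_pos (by exact_mod_cast hk)
  have hlogl : 0 < Real.log l := Real.log_pos (by exact_mod_cast hl)
  obtain ⟨N, hN⟩ := exists_nat_gt ((2 * H + 1) * Real.log l)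
  have hN0 : 0 < N := by
    have : (0 : ℝ) < N := lt_trans (by positivity) hN
    exact_mod_cast this
  obtain ⟨j, q, hq, -, hjq⟩ :=
    Real.exists_int_int_abs_mul_sub_le (Real.log k / Real.log l) hN0
  have hj : 0 ≤ j := by
    by_contra! hneg
    have hj1 : (j : ℝ) ≤ -1 := by exact_mod_cast (by omega : j ≤ -1)
    have hqpos : (0 : ℝ) < q := by exact_mod_cast hq
    have hprod : 0 < (q : ℝ) * (Real.log k / Real.log l) := by positivity
    have hle : (1 : ℝ) / (N + 1) < 1 := by
      rw [div_lt_one (by positivity)]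
      have : (0 : ℝ) < N := by exact_mod_cast hN0
      linarith
    have := (abs_le.mp hjq).2
    linarith
  lift q to ℕ using hq.le
  lift j to ℕ using hj
  have hne : k ^ q ≠ l ^ j := fun h => by
    have := (hind q j h).1
    omega
  have hclose : |q * Real.log k - j * Real.log l| * (2 * H + 1) ≤ 1 := by
    have hfactor : q * Real.log k - j * Real.log l =
        (q * (Real.log k / Real.log l) - j) * Real.log l := by
      field_simp
    have hjq' : |(q : ℝ) * (Real.log k / Real.log l) - j| ≤ 1 / (N + 1) := by
      exact_mod_cast hjq
    rw [hfactor, abs_mul, abs_of_pos hlogl, mul_assoc]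
    calc |(q : ℝ) * (Real.log k / Real.log l) - j| * (Real.log l * (2 * H + 1))
        ≤ 1 / (N + 1) * (N + 1) := by
          gcongr
          linarith
      _ = 1 := by field_simp
  have hgap : ∀ (A B : ℕ) (x y : ℝ), (A : ℝ) = Real.exp x → (B : ℝ) = Real.exp y → A < B →
      |y - x| * (2 * H + 1) ≤ 1 → H * (B - A) ≤ A := by
    intro A B x y hA hB hAB hxy
    have habs := abs_nonneg (y - x)
    have hH : (0 : ℝ) ≤ H := by positivity
    have hexp := (abs_le.mp (Real.abs_exp_sub_one_le (x := y - x) (by nlinarith))).2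
    have hBA : (B : ℝ) = A * Real.exp (y - x) := by
      rw [hA, hB, ← Real.exp_add]
      ring_nf
    have hA0 : (0 : ℝ) < A := hA ▸ Real.exp_pos x
    have hreal : (H : ℝ) * (B - A) ≤ A := by
      calc (H : ℝ) * (B - A) = A * (H * (Real.exp (y - x) - 1)) := by rw [hBA]; ring
        _ ≤ A * 1 := by
          gcongr
          nlinarith
        _ = A := mul_one _
    have : ((H * (B - A) : ℕ) : ℝ) ≤ A := by
      rw [Nat.cast_mul, Nat.cast_sub hAB.le]
      exact hreal
    exact_mod_cast this
  have hpow : ∀ a n : ℕ, 2 ≤ a → ((a ^ n : ℕ) : ℝ) = Real.exp (n * Real.log a) := by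
    intro a n ha
    rw [Real.exp_nat_mul, Real.exp_log (by positivity)]
    push_cast
    rfl
  refine ⟨q, j, ?_⟩
  rcases lt_or_gt_of_ne hne with h | h
  · exact Or.inl ⟨h, hgap _ _ _ _ (hpow k q hk) (hpow l j hl) h (by rwa [abs_sub_comm])⟩
  · exact Or.inr ⟨h, hgap _ _ _ _ (hpow l j hl) (hpow k q hk) h hclose⟩

/-! ### Cobham's theorem for uniformly recurrent sequences -/

/-- If a linearly recurrent sequence is invariant under the translations by `d * A` and `d * B`
on long overlapping windows, and `B - A` is small compared to `A`, then it has period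
`d * (B - A)`. -/
lemma periodic_of_close_translations {Ω : Type*} {k E : ℕ} (hk : 1 < k) {c : ℕ → Ω}
    (hlin : ∀ m n j : ℕ, 1 ≤ j →
      ∃ i, k ^ (m + E) * j ≤ i ∧ i + k ^ m ≤ k ^ (m + E) * (j + 1) ∧
        ∀ t < k ^ m, c (i + t) = c (n + t))
    {x d A B : ℕ} (hd : 1 ≤ d) (hAB : A < B)
    (hclose : (x + 2 * d * k ^ (E + 1)) * (B - A) ≤ A)
    (hA : ∀ i < A, c (A * x + i + d * A) = c (A * x + i))
    (hB : ∀ i < B, c (B * x + i + d * B) = c (B * x + i)) (n : ℕ) :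
    c (n + d * (B - A)) = c n := by
  obtain ⟨D, rfl⟩ := Nat.exists_eq_add_of_lt hAB
  obtain ⟨D, hD, hD1⟩ : ∃ D', D + 1 = D' ∧ 1 ≤ D' := ⟨D + 1, rfl, by omega⟩
  rw [add_assoc, hD] at hclose hB ⊢
  rw [Nat.add_sub_cancel_left] at hclose ⊢
  have hwindow : ∀ j, (A + D) * x + d * A ≤ j → j < A * x + A + d * A →
      c (j + d * D) = c j := by
    intro j hj hj'
    obtain ⟨s, rfl⟩ := Nat.exists_eq_add_of_le hj
    have h₁ := hA (D * x + s) (by nlinarith)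
    have h₂ := hB s (by nlinarith)
    rw [show (A + D) * x + d * A + s + d * D = (A + D) * x + s + d * (A + D) by ring, h₂,
      show (A + D) * x + d * A + s = A * x + (D * x + s) + d * A by ring, h₁]
    congr 1
    ring
  have hp : 1 ≤ d * D := Nat.mul_pos hd hD1
  set m := Nat.log k (d * D) + 1 with hm
  have hlt : d * D < k ^ m := Nat.lt_pow_succ_log_self hk _
  have hle : k ^ m ≤ k * (d * D) := by
    rw [hm, pow_succ, mul_comm]
    exact Nat.mul_le_mul_left _ (Nat.pow_log_le_self k (by omega))
  set Q := k ^ (m + E) with hQdef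
  have hQ : Q ≤ k ^ (E + 1) * (d * D) := by
    calc Q = k ^ E * k ^ m := by rw [hQdef, pow_add, mul_comm]
      _ ≤ k ^ E * (k * (d * D)) := Nat.mul_le_mul_left _ hle
      _ = _ := by ring
  have hQpos : 0 < Q := by positivity
  set start := (A + D) * x + d * A with hstart
  obtain ⟨i, hi, hi', hocc⟩ := hlin m n (start / Q + 1) (Nat.le_add_left _ _)
  rw [← hQdef, mul_add, mul_one] at hi
  rw [← hQdef, mul_add, mul_add, mul_one] at hi'
  have hdm := Nat.div_add_mod start Q
  have hmod := Nat.mod_lt start hQpos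
  have hroom : start + 2 * Q ≤ A * x + A + d * A := by
    nlinarith
  have h := hwindow i (by linarith) (by linarith [Nat.zero_le (start % Q)])
  rw [← hocc (d * D) hlt, h]
  simpa using hocc 0 (by omega)

/-- Cobham's theorem for uniformly recurrent sequences. -/
lemma exists_period_of_isAutomatic {Ω : Type*} {k l : ℕ} (hk : 2 ≤ k) (hl : 2 ≤ l)
    (hind : MultIndep k l) {c : ℕ → Ω} (hck : IsAutomatic k c) (hcl : IsAutomatic l c)
    (hrec : ∀ n L : ℕ, ∃ C, ∀ N, ∃ i, N ≤ i ∧ i ≤ N + C ∧ ∀ j < L, c (i + j) = c (n + j)) :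
    ∃ q, 1 ≤ q ∧ ∀ n, c (n + q) = c n := by
  obtain ⟨S, _, f, τ, hf, hτ⟩ := hck.exists_isSelfSimilar hk
  obtain ⟨T, _, g, σ, hg, hσ⟩ := hcl.exists_isSelfSimilar hl
  obtain ⟨E, hE⟩ := exists_linear_recurrence hk hf hτ hrec
  obtain ⟨x, d, hx, hd, hfx, hgx⟩ : ∃ x d : ℕ, 1 ≤ x ∧ 1 ≤ d ∧ f (x + d) = f x ∧
      g (x + d) = g x := by
    obtain ⟨u, v, hne, huv⟩ :=
      Finite.exists_ne_map_eq_of_infinite (fun n : ℕ => (f (n + 1), g (n + 1)))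
    simp only [Prod.mk.injEq] at huv
    rcases lt_or_gt_of_ne hne with h | h
    · obtain ⟨d, rfl⟩ := Nat.exists_eq_add_of_lt h
      rw [show u + d + 1 + 1 = u + 1 + (d + 1) by ring] at huv
      exact ⟨u + 1, d + 1, by omega, by omega, huv.1.symm, huv.2.symm⟩
    · obtain ⟨d, rfl⟩ := Nat.exists_eq_add_of_lt h
      rw [show v + d + 1 + 1 = v + 1 + (d + 1) by ring] at huv
      exact ⟨v + 1, d + 1, by omega, by omega, huv.1, huv.2⟩
  have hshift_k : ∀ m, ∀ i < k ^ m, c (k ^ m * x + i + d * k ^ m) = c (k ^ m * x + i) := by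
    intro m i hi
    rw [hτ, hτ, ← (hf.pow hk m) _ _ i (by omega) hx hi hfx]
    ring_nf
  have hshift_l : ∀ n, ∀ i < l ^ n, c (l ^ n * x + i + d * l ^ n) = c (l ^ n * x + i) := by
    intro n i hi
    rw [hσ, hσ, ← (hg.pow hl n) _ _ i (by omega) hx hi hgx]
    ring_nf
  obtain ⟨m, n, ⟨hlt, hclose⟩ | ⟨hlt, hclose⟩⟩ :=
    exists_pow_close hk hl hind (x + 2 * d * k ^ (E + 1))
  · exact ⟨d * (l ^ n - k ^ m), Nat.mul_pos hd (by omega),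
      periodic_of_close_translations hk hE hd hlt hclose (hshift_k m) (hshift_l n)⟩
  · exact ⟨d * (k ^ m - l ^ n), Nat.mul_pos hd (by omega),
      periodic_of_close_translations hk hE hd hlt hclose (hshift_l n) (hshift_k m)⟩

/-! ### Factors and the minimal word -/

lemma occursAt_map_range {Ω : Type*} {a : ℕ → Ω} {u : ℕ → Ω} {n i : ℕ} :
    OccursAt a ((List.range n).map u) i ↔ ∀ j < n, a (i + j) = u j := by
  simp [OccursAt, eq_comm]

lemma OccursAt.append_left {Ω : Type*} {a : ℕ → Ω} {v w : List Ω} {i : ℕ}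
    (h : OccursAt a (v ++ w) i) : OccursAt a v i := by
  intro j hj
  rw [← h j (by simp; omega)]
  simp [List.getElem_append_left hj]

lemma IsFactor.exists_append {Ω : Type*} {a : ℕ → Ω} {w : List Ω} (h : IsFactor a w) :
    ∃ s, IsFactor a (w ++ [s]) := by
  obtain ⟨i, hi⟩ := h
  refine ⟨a (i + w.length), i, fun j hj => ?_⟩
  have hj' : j ≤ w.length := by simpa [Nat.lt_succ_iff] using hj
  rcases hj'.lt_or_eq with hlt | rfl
  · rw [← hi j hlt]
    simp [List.getElem_append_left hlt]
  · simp

lemma lex_append_singleton {Ω : Type*} {r : Ω → Ω → Prop} {u v : List Ω} {s t : Ω}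
    (hlen : u.length = v.length) (h : List.Lex r (u ++ [s]) (v ++ [t])) :
    List.Lex r u v ∨ u = v ∧ r s t := by
  induction u generalizing v with
  | nil =>
    obtain rfl : v = [] := List.eq_nil_of_length_eq_zero hlen.symm
    cases h with
    | rel h => exact Or.inr ⟨rfl, h⟩
    | cons h => cases h
  | cons x u ih =>
    cases v with
    | nil => simp at hlen
    | cons y v =>
      cases h with
      | rel h => exact Or.inl (List.Lex.rel h)
      | cons h =>
        rcases ih (by simpa using hlen) h with h | ⟨rfl, hst⟩
        · exact Or.inl (List.Lex.cons h)
        · exact Or.inr ⟨rfl, hst⟩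

lemma exists_isMinWord {Ω : Type*} [Finite Ω] [LinearOrder Ω] (a : ℕ → Ω) :
    ∃ c, IsMinWord a c := by
  have hnext : ∀ w : List Ω, ∃ s, IsFactor a w →
      IsFactor a (w ++ [s]) ∧ ∀ t, IsFactor a (w ++ [t]) → s ≤ t := by
    intro w
    by_cases hw : IsFactor a w
    · obtain ⟨s, hs, hmin⟩ :=
        Set.exists_min_image {s | IsFactor a (w ++ [s])} id (Set.toFinite _) hw.exists_append
      exact ⟨s, fun _ => ⟨hs, hmin⟩⟩
    · exact ⟨a 0, fun h => absurd h hw⟩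
  choose next hnext using hnext
  let W : ℕ → List Ω := fun n => Nat.rec [] (fun _ w => w ++ [next w]) n
  have hW : ∀ n, prefixWord (fun n => next (W n)) n = W n := by
    intro n
    induction n with
    | zero => rfl
    | succ n ih =>
      rw [prefixWord, List.range_succ, List.map_append, ← prefixWord, ih]
      rfl
  refine ⟨fun n => next (W n), fun n => ?_⟩
  rw [hW]
  induction n with
  | zero =>
    refine ⟨⟨0, fun j hj => absurd hj (Nat.not_lt_zero j)⟩, fun w _ _ h => ?_⟩
    cases h
  | succ n ih =>
    obtain ⟨hfac, hmin⟩ := ih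
    have hlen : (W n).length = n := by rw [← hW n]; simp [prefixWord]
    refine ⟨(hnext (W n) hfac).1, fun w hwlen hw hlex => ?_⟩
    obtain ⟨v, s, rfl⟩ : ∃ v s, w = v ++ [s] := by
      rcases List.eq_nil_or_concat w with rfl | ⟨v, s, h⟩
      · simp at hwlen
      · exact ⟨v, s, by simpa using h⟩
    have hvlen : v.length = n := by simpa using hwlen
    have hv : IsFactor a v := hw.imp fun _ h => h.append_left
    rcases lex_append_singleton (hvlen.trans hlen.symm) hlex with h | ⟨rfl, h⟩
    · exact hmin v hvlen hv h
    · exact absurd ((hnext _ hfac).2 s hw) (not_le.mpr h)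

/-- If all prefixes of `c` are factors of the uniformly recurrent sequence `a`, then each block
of `a` occurs in `c` with bounded gaps. -/
lemma UniformlyRecurrent.exists_gap_of_prefixes {Ω : Type*} {a c : ℕ → Ω}
    (ha : UniformlyRecurrent a) (hc : ∀ n, IsFactor a (prefixWord c n)) (n L : ℕ) :
    ∃ C, ∀ N, ∃ i, N ≤ i ∧ i ≤ N + C ∧ ∀ j < L, c (i + j) = a (n + j) := by
  obtain ⟨C, hC⟩ := ha ((List.range L).map fun j => a (n + j))
    ⟨n, occursAt_map_range.mpr fun _ _ => rfl⟩
  refine ⟨C, fun N => ?_⟩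
  obtain ⟨p, hp⟩ := hc (N + C + L)
  rw [prefixWord, occursAt_map_range] at hp
  obtain ⟨i, hi, hi', hocc⟩ := hC (p + N)
  rw [occursAt_map_range] at hocc
  obtain ⟨s, rfl⟩ := Nat.exists_eq_add_of_le hi
  refine ⟨N + s, by omega, by omega, fun j hj => ?_⟩
  rw [← hp (N + s + j) (by omega), ← hocc j hj]
  congr 1
  ring


/-- Weak form of Fagnot's theorem: if `k, l ≥ 2` are multiplicatively independent,
`a` is `k`-automatic, `b` is `l`-automatic, `ℒ(a) = ℒ(b)`, and `a`, `b` are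
uniformly recurrent, then `a` and `b` are periodic. One may assume as input the
Allouche–Rampersad–Shallit theorem (for a `k`-automatic `a`, the word `min(a)` is
`k`-automatic) and the Morse–Hedlund-type fact that a sequence with a bounded
number of factors of each length is ultimately periodic. -/
theorem weak_fagnot {Ω : Type} [Fintype Ω] [LinearOrder Ω]
    (k l : ℕ) (hk : 2 ≤ k) (hl : 2 ≤ l) (hind : MultIndep k l)
    (a b : ℕ → Ω) (ha : IsAutomatic k a) (hb : IsAutomatic l b)
    (hlang : ∀ w : List Ω, IsFactor a w ↔ IsFactor b w)
    (hua : UniformlyRecurrent a) (hub : UniformlyRecurrent b)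
    (ars : ∀ (k' : ℕ), 2 ≤ k' → ∀ x c : ℕ → Ω, IsAutomatic k' x → IsMinWord x c →
      IsAutomatic k' c)
    (mh : ∀ x : ℕ → Ω,
      (∃ B : ℕ, ∀ n : ℕ, Set.ncard {w : List Ω | w.length = n ∧ IsFactor x w} ≤ B) →
      ∃ q : ℕ, 1 ≤ q ∧ ∃ N : ℕ, ∀ n : ℕ, N ≤ n → x (n + q) = x n) :
    (∃ q : ℕ, 1 ≤ q ∧ ∀ n : ℕ, a (n + q) = a n) ∧
    (∃ q : ℕ, 1 ≤ q ∧ ∀ n : ℕ, b (n + q) = b n) := by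
  obtain ⟨c, hac⟩ := exists_isMinWord a
  have hbc : IsMinWord b c := fun n =>
    ⟨(hlang _).mp (hac n).1, fun w hw hwb => (hac n).2 w hw ((hlang w).mpr hwb)⟩
  have hgap_a := hua.exists_gap_of_prefixes fun n => (hac n).1
  have hgap_b := hub.exists_gap_of_prefixes fun n => (hbc n).1
  have hrec : ∀ n L : ℕ, ∃ C, ∀ N, ∃ i, N ≤ i ∧ i ≤ N + C ∧
      ∀ j < L, c (i + j) = c (n + j) := by
    intro n L
    obtain ⟨p, hp⟩ := (hac (n + L)).1
    rw [prefixWord, occursAt_map_range] at hp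
    obtain ⟨C, hC⟩ := hgap_a (p + n) L
    refine ⟨C, fun N => ?_⟩
    obtain ⟨i, hi, hi', hocc⟩ := hC N
    refine ⟨i, hi, hi', fun j hj => ?_⟩
    rw [hocc j hj, add_assoc, hp (n + j) (by omega)]
  obtain ⟨q, hq, hper⟩ := exists_period_of_isAutomatic hk hl hind
    (ars k hk a c ha hac) (ars l hl b c hb hbc) hrec
  have htransfer : ∀ x : ℕ → Ω, (∀ n L : ℕ, ∃ C, ∀ N, ∃ i, N ≤ i ∧ i ≤ N + C ∧
      ∀ j < L, c (i + j) = x (n + j)) → ∀ n, x (n + q) = x n := by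
    intro x hx n
    obtain ⟨C, hC⟩ := hx n (q + 1)
    obtain ⟨i, -, -, hocc⟩ := hC 0
    rw [← hocc q (by omega), hper]
    simpa using hocc 0 (by omega)
  exact ⟨⟨q, hq, htransfer a hgap_a⟩, ⟨q, hq, htransfer b hgap_b⟩⟩
end

section
/- Let a, b : ℕ → Ω be sequences with values in a finite set Ω. If a and b coincide almost everywhere and both a and b are uniformly recurrent, then ℒ(a) = ℒ(b), i.e., a and b have exactly the same factors. -/
open Filter

/-- If every interval of length `L` meets `D`, then `D` has at least `k` elements below `k * L`. -/
theorem le_card_inter_Iio_mul {D : Set ℕ} {L : ℕ} (hD : ∀ N, ∃ j < L, N + j ∈ D) (k : ℕ) :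
    k ≤ Nat.card ↥(D ∩ Set.Iio (k * L)) := by
  choose f hfL hfD using hD
  let g : Fin k → ↥(D ∩ Set.Iio (k * L)) := fun i =>
    ⟨i * L + f (i * L), hfD _, by
      have h₁ := hfL (i * L)
      have h₂ : (i + 1 : ℕ) * L ≤ k * L := Nat.mul_le_mul_right L i.isLt
      rw [Nat.add_mul] at h₂
      simp only [Set.mem_Iio]
      omega⟩
  have hg : Function.Injective g := by
    intro i j hij
    have h : i * L + f (i * L) = j * L + f (j * L) := congrArg Subtype.val hij
    have hL : 0 < L := (Nat.zero_le _).trans_lt (hfL 0)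
    have hdiv : ∀ m : ℕ, (m * L + f (m * L)) / L = m := fun m => by
      rw [Nat.add_comm, Nat.add_mul_div_right _ _ hL, Nat.div_eq_of_lt (hfL _), Nat.zero_add]
    exact Fin.ext (by rw [← hdiv i, h, hdiv j])
  have : Finite ↥(D ∩ Set.Iio (k * L)) := ((Set.finite_Iio _).inter_of_right D).to_subtype
  simpa using Nat.card_le_card_of_injective g hg

/-- A set of upper density zero has arbitrarily long gaps. -/
theorem exists_gap_of_upperDensity_eq_zero {D : Set ℕ} (hD : upperDensity D = 0) (L : ℕ) :
    ∃ N, ∀ j < L, N + j ∉ D := by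
  by_contra! h
  have hL : 0 < L := by
    obtain ⟨j, hj, -⟩ := h 0
    omega
  have hbdd : IsBoundedUnder (· ≤ ·) atTop
      (fun n : ℕ => (Nat.card ↥(D ∩ Set.Iio n) : ℝ) / n) := by
    refine isBoundedUnder_of ⟨1, fun n => div_le_one_of_le₀ ?_ n.cast_nonneg⟩
    have hcard := Nat.card_mono (Set.finite_Iio n) (Set.inter_subset_right (s := D))
    simpa using hcard
  have hfreq : ∃ᶠ n : ℕ in atTop,
      (1 / L : ℝ) ≤ (Nat.card ↥(D ∩ Set.Iio n) : ℝ) / n := by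
    refine frequently_atTop.2 fun m => ⟨(m + 1) * L, by nlinarith, ?_⟩
    have hk : ((m + 1 : ℕ) : ℝ) ≤ Nat.card ↥(D ∩ Set.Iio ((m + 1) * L)) :=
      Nat.cast_le.2 (le_card_inter_Iio_mul h (m + 1))
    have hL' : (0 : ℝ) < L := Nat.cast_pos.2 hL
    rw [div_le_div_iff₀ hL' (by positivity)]
    push_cast at hk ⊢
    nlinarith
  have hle : (1 / L : ℝ) ≤ upperDensity D := le_limsup_of_frequently_le hfreq hbdd
  have : (0 : ℝ) < 1 / L := by positivity
  linarith

/-- Factors of a uniformly recurrent sequence are factors of every sequence coinciding with it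
almost everywhere. -/
theorem UniformlyRecurrent.isFactor_of_ae_coincide {Ω : Type*} {a b : ℕ → Ω}
    (ha : UniformlyRecurrent a) (hae : upperDensity {n : ℕ | a n ≠ b n} = 0)
    {w : List Ω} (hw : IsFactor a w) : IsFactor b w := by
  obtain ⟨C, hC⟩ := ha w hw
  obtain ⟨N, hN⟩ := exists_gap_of_upperDensity_eq_zero hae (C + w.length)
  obtain ⟨i, hNi, hiC, hi⟩ := hC N
  refine ⟨i, fun j hj => (hi j hj).trans ?_⟩
  have h := hN (i + j - N) (by omega)
  rw [show N + (i + j - N) = i + j by omega] at h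
  simpa using h

/-- Two uniformly recurrent sequences which coincide almost everywhere have the
same language. -/
theorem uniformly_recurrent_ae_coincide_lang_eq {Ω : Type} [Fintype Ω]
    (a b : ℕ → Ω)
    (hae : upperDensity {n : ℕ | a n ≠ b n} = 0)
    (hua : UniformlyRecurrent a) (hub : UniformlyRecurrent b) :
    ∀ w : List Ω, IsFactor a w ↔ IsFactor b w := by
  have hae' : upperDensity {n : ℕ | b n ≠ a n} = 0 := by simpa only [ne_comm] using hae
  exact fun w => ⟨hua.isFactor_of_ae_coincide hae, hub.isFactor_of_ae_coincide hae'⟩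
end

section
/- Let Ω be a finite totally ordered set and let a : ℕ → Ω be uniformly recurrent. Then ℒ(a) = ℒ(min(a)): the set of factors of a equals the set of factors of the infinite word min(a). -/
open Filter

/-- If every prefix of `c` is a factor of `a`, and `a` is uniformly recurrent, then `a` and `c`
have the same factors. -/
theorem isFactor_iff_of_isFactor_prefixWord {Ω : Type*} {a c : ℕ → Ω}
    (hua : UniformlyRecurrent a) (hc : ∀ n, IsFactor a (prefixWord c n)) (w : List Ω) :
    IsFactor a w ↔ IsFactor c w := by
  have hpre : ∀ n, ∃ p, ∀ j < n, c j = a (p + j) := by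
    intro n
    obtain ⟨p, hp⟩ := hc n
    refine ⟨p, fun j hj => ?_⟩
    simpa [prefixWord] using hp j (by simpa [prefixWord] using hj)
  constructor
  · intro hw
    obtain ⟨C, hC⟩ := hua w hw
    obtain ⟨p, hp⟩ := hpre (C + w.length)
    obtain ⟨i, hpi, hiC, hi⟩ := hC p
    refine ⟨i - p, fun j hj => ?_⟩
    rw [hi j hj, hp (i - p + j) (by omega)]
    congr 1
    omega
  · rintro ⟨i, hi⟩
    obtain ⟨p, hp⟩ := hpre (i + w.length)
    refine ⟨p + i, fun j hj => ?_⟩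
    rw [hi j hj, hp (i + j) (by omega), add_assoc]

/-- For a uniformly recurrent sequence `a`, the language of `a` equals the language
of the word `min(a)`. -/
theorem lang_eq_lang_minWord {Ω : Type} [Fintype Ω] [LinearOrder Ω]
    (a : ℕ → Ω) (hua : UniformlyRecurrent a)
    (c : ℕ → Ω) (hc : IsMinWord a c) :
    ∀ w : List Ω, IsFactor a w ↔ IsFactor c w := by
  exact isFactor_iff_of_isFactor_prefixWord hua fun n => (hc n).1
end

section
/- Let k, l ≥ 2 be multiplicatively independent integers, let u ∈ Σ_k* and v ∈ Σ_l* be words beginning with nonzero digits, and let t ≥ 0. Then there exist arbitrarily large integers N (which may be taken of the form N = k^i l^j) such that (N)_k = u 0 x 0^{t+1} for some x ∈ Σ_k* and (N)_l = v 0 y 0^{t+1} for some y ∈ Σ_l*. -/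
open Filter

/-- If `k` and `l` are multiplicatively independent then `log l / log k` is irrational. -/
theorem MultIndep.irrational_log_div_log {k l : ℕ} (hk : 2 ≤ k) (hl : 2 ≤ l)
    (h : MultIndep k l) : Irrational (Real.log l / Real.log k) := by
  rintro ⟨r, hr⟩
  have hk' : 0 < Real.log k := Real.log_pos (by exact_mod_cast hk)
  have hl' : 0 < Real.log l := Real.log_pos (by exact_mod_cast hl)
  have hr0 : 0 < r := by
    have : (0 : ℝ) < r := hr ▸ div_pos hl' hk'
    exact_mod_cast this
  obtain ⟨n, hn⟩ := Int.eq_ofNat_of_zero_le (Rat.num_pos.2 hr0).le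
  have hden : (r.den : ℝ) ≠ 0 := by exact_mod_cast r.den_nz
  have hlog : (n : ℝ) * Real.log k = r.den * Real.log l := by
    have hr' : (r : ℝ) = n / r.den := by
      rw [Rat.cast_def, hn, Int.cast_natCast]
    rw [hr', div_eq_div_iff hden hk'.ne'] at hr
    linarith
  have hpow : (k : ℝ) ^ n = (l : ℝ) ^ r.den := by
    refine Real.log_injOn_pos (Set.mem_Ioi.2 (by positivity)) (Set.mem_Ioi.2 (by positivity)) ?_
    rw [Real.log_pow, Real.log_pow, hlog]
  exact r.den_nz (h n r.den (by exact_mod_cast hpow)).2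

/-- If `k` and `l` are multiplicatively independent, then arbitrarily large powers of `l` have a
base-`k` representation starting with the digits of a given positive integer `w`. -/
theorem MultIndep.exists_pow_mem_Ico {k l : ℕ} (hk : 2 ≤ k) (hl : 2 ≤ l) (h : MultIndep k l)
    {w : ℕ} (hw : 0 < w) (T : ℕ) :
    ∃ j m : ℕ, T ≤ j ∧ w * k ^ m ≤ l ^ j ∧ l ^ j < (w + 1) * k ^ m := by
  have hk' : 0 < Real.log k := Real.log_pos (by exact_mod_cast hk)
  have : Fact (0 < Real.log k) := ⟨hk'⟩
  have hw' : (0 : ℝ) < w := by exact_mod_cast hw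
  have hlt : Real.log w < Real.log (w + 1) := Real.log_lt_log hw' (by linarith)
  obtain ⟨c, hc⟩ := exists_between hlt
  have hcl : MapClusterPt (c : AddCircle (Real.log k)) atTop
      (fun n : ℕ => n • (Real.log l : AddCircle (Real.log k))) :=
    ((mapClusterPt_atTop_nsmul_tfae _ _).out 0 3).2
      (AddCircle.denseRange_zsmul_coe_iff.2 (h.irrational_log_div_log hk hl) _)
  have hnhds : ((↑) : ℝ → AddCircle (Real.log k)) '' Set.Ioo (Real.log w) (Real.log (w + 1)) ∈
      nhds (c : AddCircle (Real.log k)) :=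
    (QuotientAddGroup.isOpenMap_coe _ isOpen_Ioo).mem_nhds ⟨c, hc, rfl⟩
  obtain ⟨j, ⟨y, ⟨hy₁, hy₂⟩, hyj⟩, hj⟩ :=
    ((hcl.frequently hnhds).and_eventually (eventually_ge_atTop (max T (w + 1)))).exists
  rw [← AddCircle.coe_nsmul, eq_comm, ← sub_eq_zero, ← AddCircle.coe_sub,
    AddCircle.coe_eq_zero_iff] at hyj
  obtain ⟨m, hm⟩ := hyj
  rw [zsmul_eq_mul, nsmul_eq_mul, ← Real.log_pow] at hm
  have hjl : Real.log (w + 1) ≤ Real.log ((l : ℝ) ^ j) := by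
    have : w + 1 ≤ l ^ j := ((le_max_right _ _).trans hj).trans (Nat.lt_pow_self hl).le
    exact Real.log_le_log (by positivity) (by exact_mod_cast this)
  have hm0 : 0 ≤ m := by
    have : (0 : ℝ) < m := pos_of_mul_pos_left (by rw [hm]; linarith) hk'.le
    exact_mod_cast this.le
  lift m to ℕ using hm0
  rw [Int.cast_natCast, ← Real.log_pow] at hm
  have hkm : (0 : ℝ) < (k : ℝ) ^ m := by positivity
  have hlj : (0 : ℝ) < (l : ℝ) ^ j := by positivity
  refine ⟨j, m, (le_max_left _ _).trans hj, ?_, ?_⟩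
  · have : (w : ℝ) * (k : ℝ) ^ m ≤ (l : ℝ) ^ j := by
      rw [← Real.log_le_log_iff (by positivity) hlj, Real.log_mul hw'.ne' hkm.ne']
      linarith
    exact_mod_cast this
  · have : (l : ℝ) ^ j < ((w : ℝ) + 1) * (k : ℝ) ^ m := by
      rw [← Real.log_lt_log_iff hlj (by positivity), Real.log_mul (by positivity) hkm.ne']
      linarith
    exact_mod_cast this

/-- Every number below `k ^ p` is the value of a word of length `p`. -/
theorem exists_word_ofDigits_eq {k : ℕ} (p s : ℕ) (hs : s < k ^ p) :
    ∃ x : List (Fin k), x.length = p ∧ Nat.ofDigits k (x.map Fin.val).reverse = s := by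
  induction p generalizing s with
  | zero => exact ⟨[], rfl, by simpa [eq_comm] using hs⟩
  | succ p ih =>
    have hk : 0 < k := by
      rcases Nat.eq_zero_or_pos k with rfl | hk
      · simp at hs
      · exact hk
    obtain ⟨x, hx, hxs⟩ := ih (s / k) (Nat.div_lt_of_lt_mul (by rwa [pow_succ'] at hs))
    refine ⟨x ++ [⟨s % k, Nat.mod_lt s hk⟩], by simp [hx], ?_⟩
    simp [Nat.ofDigits_cons, hxs, Nat.mod_add_div]

/-- A word with nonzero leading digit is the base-`k` representation of its value. -/
theorem kRepr_ofDigits {k : ℕ} (hk : 1 < k) (w : List (Fin k)) (hw : w ≠ [])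
    (hw0 : (w.head hw : ℕ) ≠ 0) :
    kRepr k (Nat.ofDigits k (w.map Fin.val).reverse) = w := by
  apply List.map_injective_iff.2 Fin.val_injective
  rw [kRepr, dif_pos hk, List.map_pmap, List.pmap_eq_map, List.map_id',
    Nat.digits_ofDigits k hk _ (by simp) (by simpa using fun _ => hw0), List.reverse_reverse]

/-- A word with nonzero leading digit has positive value. -/
theorem ofDigits_pos_of_head_ne_zero {k : ℕ} (hk : 1 < k) (w : List (Fin k)) (hw : w ≠ [])
    (hw0 : (w.head hw : ℕ) ≠ 0) : 0 < Nat.ofDigits k (w.map Fin.val).reverse := by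
  refine Nat.pos_of_ne_zero fun h => hw ?_
  simpa [h, kRepr, hk] using (kRepr_ofDigits hk w hw hw0).symm

/-- A number divisible by `k ^ T` lying in the interval of numbers starting with `u 0` in base `k`
has a base-`k` representation of the form `u 0 x 0^T`. -/
theorem exists_kRepr_eq {k : ℕ} (hk : 1 < k) (u : List (Fin k)) (hu : u ≠ [])
    (hu0 : (u.head hu : ℕ) ≠ 0) (z : Fin k) (hz : (z : ℕ) = 0) {N m T : ℕ} (hT : T ≤ m)
    (hdvd : k ^ T ∣ N) (hle : Nat.ofDigits k (u.map Fin.val).reverse * k * k ^ m ≤ N)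
    (hlt : N < (Nat.ofDigits k (u.map Fin.val).reverse * k + 1) * k ^ m) :
    ∃ x : List (Fin k), kRepr k N = u ++ z :: (x ++ List.replicate T z) := by
  obtain ⟨q, rfl⟩ := Nat.exists_eq_add_of_le hT
  set U := Nat.ofDigits k (u.map Fin.val).reverse with hU
  have hkT : 0 < k ^ T := by positivity
  obtain ⟨n, rfl⟩ := hdvd
  have hle' : U * k * k ^ q ≤ n := by
    refine Nat.le_of_mul_le_mul_left ?_ hkT
    calc _ = U * k * k ^ (T + q) := by ring
      _ ≤ _ := hle
  have hlt' : n < (U * k + 1) * k ^ q := by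
    refine Nat.lt_of_mul_lt_mul_left (a := k ^ T) ?_
    calc _ < _ := hlt
      _ = _ := by ring
  obtain ⟨s, rfl⟩ := Nat.exists_eq_add_of_le hle'
  obtain ⟨x, hx, hxs⟩ := exists_word_ofDigits_eq (k := k) q s (by linarith)
  refine ⟨x, ?_⟩
  have hval : Nat.ofDigits k ((u ++ z :: (x ++ List.replicate T z)).map Fin.val).reverse =
      k ^ T * (U * k * k ^ q + s) := by
    simp only [List.map_append, List.map_cons, List.map_replicate, List.reverse_append,
      List.reverse_cons, List.reverse_replicate, Nat.ofDigits_append, Nat.ofDigits_singleton,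
      Nat.ofDigits_replicate_zero, List.length_append, List.length_replicate,
      List.length_reverse, List.length_map, List.length_singleton, hx, hxs, hz, ← hU]
    ring
  rw [← hval]
  exact kRepr_ofDigits hk _ (by simp) (by simpa [List.head_append, hu] using hu0)

/-- There exist arbitrarily large integers `N`, which may be taken of the form
`N = k^i l^j`, whose base-`k` representation is `u 0 x 0^{t+1}` and whose base-`l`
representation is `v 0 y 0^{t+1}`. -/
theorem exists_large_doubly_prescribed (k l : ℕ) (hk : 2 ≤ k) (hl : 2 ≤ l)
    (hind : MultIndep k l)
    (u : List (Fin k)) (v : List (Fin l))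
    (hu : u ≠ []) (hu0 : (u.head hu : ℕ) ≠ 0)
    (hv : v ≠ []) (hv0 : (v.head hv : ℕ) ≠ 0)
    (t : ℕ) (z₀ : Fin k) (hz₀ : (z₀ : ℕ) = 0) (z₀' : Fin l) (hz₀' : (z₀' : ℕ) = 0) :
    ∀ M : ℕ, ∃ N : ℕ, M < N ∧ (∃ i j : ℕ, N = k ^ i * l ^ j) ∧
      (∃ x : List (Fin k), kRepr k N = u ++ z₀ :: (x ++ List.replicate (t + 1) z₀)) ∧
      (∃ y : List (Fin l), kRepr l N = v ++ z₀' :: (y ++ List.replicate (t + 1) z₀')) := by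
  intro M
  have hpu := ofDigits_pos_of_head_ne_zero hk u hu hu0
  have hpv := ofDigits_pos_of_head_ne_zero hl v hv hv0
  have hind' : MultIndep l k := fun i j hij => (hind j i hij.symm).symm
  obtain ⟨j, m, hj, hj₁, hj₂⟩ :=
    hind.exists_pow_mem_Ico hk hl (Nat.mul_pos hpu (by omega : 0 < k)) (t + 1)
  obtain ⟨i, n, hi, hi₁, hi₂⟩ :=
    hind'.exists_pow_mem_Ico hl hk (Nat.mul_pos hpv (by omega : 0 < l)) (max M (t + 1))
  refine ⟨k ^ i * l ^ j, ?_, ⟨i, j, rfl⟩, ?_, ?_⟩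
  · calc M ≤ i := (le_max_left _ _).trans hi
      _ < k ^ i := Nat.lt_pow_self hk
      _ ≤ k ^ i * l ^ j := Nat.le_mul_of_pos_right _ (by positivity)
  · refine exists_kRepr_eq hk u hu hu0 z₀ hz₀ (m := m + i) (by omega)
      (Dvd.dvd.mul_right (pow_dvd_pow k (by omega)) _) ?_ ?_
    · rw [pow_add, ← mul_assoc, mul_comm (k ^ i)]
      exact Nat.mul_le_mul_right _ hj₁
    · rw [pow_add, ← mul_assoc, mul_comm (k ^ i)]
      exact Nat.mul_lt_mul_of_pos_right hj₂ (by positivity)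
  · refine exists_kRepr_eq hl v hv hv0 z₀' hz₀' (m := n + j) (by omega)
      (Dvd.dvd.mul_left (pow_dvd_pow l (by omega)) _) ?_ ?_
    · rw [pow_add, ← mul_assoc]
      exact Nat.mul_le_mul_right _ hi₁
    · rw [pow_add, ← mul_assoc]
      exact Nat.mul_lt_mul_of_pos_right hi₂ (by positivity)
end
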